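/- Let γ ∈ (0,1) and C > 0. Let u : ℝ² → ℝ be a smooth function, 2π-periodic in its first variable x, satisfying the Jacobi equation ∂²u/∂x² + ∂²u/∂s² + 2·sech²(s)·u = 0 at every point (x,s) ∈ ℝ², together with the growth bound |u(x,s)| ≤ C·cosh(s)^{1+γ} for all (x,s). Then there exist real constants c₁,…,c₆ such that u(x,s) = c₁·tanh(s) + c₂·(s·tanh(s) − 1) + c₃·cos(x)·sech(s) + c₄·sin(x)·sech(s) + c₅·cos(x)·(sinh(s) + s·sech(s)) + c₆·sin(x)·(sinh(s) + s·sech(s)). -/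

import Mathlib

/-!
The Fourier modes in `x` of a Jacobi field solve `f'' = (k² - 2 sech²) f`. This potential is
reflectionless: it is the Darboux transform of the constant potential `k²`, so `f ↦ f' - tanh · f`
turns the affine functions, `sinh` and `exp (±k s)` into the solutions `tanh` and `s tanh s - 1` for
`k = 0`, `sech` for `k = 1`, and `exp (±k s) (±k - tanh s)` for every `k`. When `k ≥ 2` the last two
form a basis of solutions, one growing like `exp (k s)` at `+∞` and the other like `exp (-k s)` at
`-∞`, so a mode bounded by `cosh ^ p` with `p < 2` vanishes. Hence only the modes `0` and `1`
survive.
-/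

open Real Filter Topology MeasureTheory

/-- `f` solves the linear equation `f'' = q f`. The derivative `f'` is carried along, so that a
solution is a solution of the associated first-order system. -/
structure IsSchrodingerSolution {𝕜 : Type*} [NontriviallyNormedField 𝕜] (q f f' : 𝕜 → 𝕜) :
    Prop where
  hasDerivAt : ∀ s, HasDerivAt f (f' s) s
  hasDerivAt_deriv : ∀ s, HasDerivAt f' (q s * f s) s

namespace IsSchrodingerSolution

section NontriviallyNormedField

variable {𝕜 : Type*} [NontriviallyNormedField 𝕜] {q f f' : 𝕜 → 𝕜}

theorem const_mul (hf : IsSchrodingerSolution q f f') (c : 𝕜) :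
    IsSchrodingerSolution q (fun s => c * f s) (fun s => c * f' s) where
  hasDerivAt s := (hf.hasDerivAt s).const_mul c
  hasDerivAt_deriv s := by
    convert! (hf.hasDerivAt_deriv s).const_mul c using 1
    ring

theorem affine (a b : 𝕜) :
    IsSchrodingerSolution (fun _ => 0) (fun s => a * s + b) (fun _ => a) where
  hasDerivAt s := by simpa using ((hasDerivAt_id s).const_mul a).add_const b
  hasDerivAt_deriv s := by simpa using hasDerivAt_const s a

/-- The Darboux transform `f ↦ f' - v f`, where `v` is the logarithmic derivative of a solution of
`φ'' = (q - c) φ`, i.e. `v` solves the Riccati equation `v' + v ^ 2 = q - c`. -/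
theorem darboux (hf : IsSchrodingerSolution q f f') {v v' : 𝕜 → 𝕜} {c : 𝕜}
    (hv : ∀ s, HasDerivAt v (v' s) s) (hriccati : ∀ s, v' s + v s ^ 2 = q s - c) :
    IsSchrodingerSolution (fun s => q s - 2 * v' s) (fun s => f' s - v s * f s)
      (fun s => (v s ^ 2 + c) * f s - v s * f' s) where
  hasDerivAt s := by
    convert! (hf.hasDerivAt_deriv s).sub ((hv s).mul (hf.hasDerivAt s)) using 1
    linear_combination f s * hriccati s
  hasDerivAt_deriv s := by
    convert! ((((hv s).pow 2).add_const c).mul (hf.hasDerivAt s)).sub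
      ((hv s).mul (hf.hasDerivAt_deriv s)) using 1
    simp only [Pi.pow_apply]
    push_cast
    linear_combination -f' s * hriccati s

end NontriviallyNormedField

section RCLike

variable {𝕜 : Type*} [RCLike 𝕜] {q f f' g g' h h' : 𝕜 → 𝕜}

theorem wronskian_eq (hf : IsSchrodingerSolution q f f') (hg : IsSchrodingerSolution q g g')
    (s t : 𝕜) : f s * g' s - f' s * g s = f t * g' t - f' t * g t := by
  have hderiv (r : 𝕜) : HasDerivAt (fun r => f r * g' r - f' r * g r) 0 r := by
    convert! ((hf.hasDerivAt r).mul (hg.hasDerivAt_deriv r)).sub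
      ((hf.hasDerivAt_deriv r).mul (hg.hasDerivAt r)) using 1
    ring
  exact is_const_of_deriv_eq_zero (fun r => (hderiv r).differentiableAt)
    (fun r => (hderiv r).deriv) s t

theorem exists_eq_add_of_wronskian_ne_zero (hf : IsSchrodingerSolution q f f')
    (hg : IsSchrodingerSolution q g g') (hh : IsSchrodingerSolution q h h') {t : 𝕜}
    (hW : g t * h' t - g' t * h t ≠ 0) : ∃ α β : 𝕜, ∀ s, f s = α * g s + β * h s := by
  refine ⟨(f t * h' t - f' t * h t) / (g t * h' t - g' t * h t),
    -(f t * g' t - f' t * g t) / (g t * h' t - g' t * h t), fun s => ?_⟩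
  rw [div_mul_eq_mul_div, div_mul_eq_mul_div, ← add_div, eq_div_iff hW, ← hg.wronskian_eq hh s,
    ← hf.wronskian_eq hh s, ← hf.wronskian_eq hg s]
  ring

end RCLike

end IsSchrodingerSolution

theorem isSchrodingerSolution_sinh : IsSchrodingerSolution (fun _ => 1) sinh cosh where
  hasDerivAt := hasDerivAt_sinh
  hasDerivAt_deriv s := by simpa using hasDerivAt_cosh s

theorem isSchrodingerSolution_exp_mul (k : ℝ) :
    IsSchrodingerSolution (fun _ => k ^ 2) (fun s => exp (k * s)) (fun s => k * exp (k * s)) := by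
  have hderiv (s : ℝ) : HasDerivAt (fun s => exp (k * s)) (k * exp (k * s)) s := by
    simpa [mul_comm] using ((hasDerivAt_id s).const_mul k).exp
  refine ⟨hderiv, fun s => ?_⟩
  convert! (hderiv s).const_mul k using 1
  ring

theorem isSchrodingerSolution_cos_mul (k : ℝ) :
    IsSchrodingerSolution (fun _ => -k ^ 2) (fun x => cos (k * x))
      (fun x => -(k * sin (k * x))) where
  hasDerivAt x := by simpa [mul_comm] using ((hasDerivAt_id x).const_mul k).cos
  hasDerivAt_deriv x := by
    convert! (((hasDerivAt_id x).const_mul k).sin.const_mul k).neg using 1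
    simp only [id]
    ring

theorem isSchrodingerSolution_sin_mul (k : ℝ) :
    IsSchrodingerSolution (fun _ => -k ^ 2) (fun x => sin (k * x))
      (fun x => k * cos (k * x)) where
  hasDerivAt x := by simpa [mul_comm] using ((hasDerivAt_id x).const_mul k).sin
  hasDerivAt_deriv x := by
    convert! ((hasDerivAt_id x).const_mul k).cos.const_mul k using 1
    simp only [id]
    ring

theorem hasDerivAt_tanh (s : ℝ) : HasDerivAt tanh ((cosh s)⁻¹ ^ 2) s := by
  have hc := (cosh_pos s).ne'
  rw [funext tanh_eq_sinh_div_cosh]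
  convert! (hasDerivAt_sinh s).div (hasDerivAt_cosh s) hc using 1
  field_simp
  linarith [cosh_sq s]

theorem inv_cosh_sq_add_tanh_sq (s : ℝ) : (cosh s)⁻¹ ^ 2 + tanh s ^ 2 = 1 := by
  have hc := (cosh_pos s).ne'
  rw [tanh_eq_sinh_div_cosh]
  field_simp
  linarith [cosh_sq s]

/-- The potential `k ^ 2 - 2 sech ^ 2` of the equation solved by the Fourier modes of order `k` of
a Jacobi field on the catenoid. -/
noncomputable def modePotential (k s : ℝ) : ℝ := k ^ 2 - 2 * (cosh s)⁻¹ ^ 2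

theorem modePotential_neg (k : ℝ) : modePotential (-k) = modePotential k :=
  funext fun s => by simp only [modePotential, neg_sq]

theorem IsSchrodingerSolution.darboux_tanh {k : ℝ} {f f' : ℝ → ℝ}
    (hf : IsSchrodingerSolution (fun _ => k ^ 2) f f') :
    IsSchrodingerSolution (modePotential k) (fun s => f' s - tanh s * f s)
      (fun s => (tanh s ^ 2 + (k ^ 2 - 1)) * f s - tanh s * f' s) :=
  hf.darboux hasDerivAt_tanh fun s => by linear_combination inv_cosh_sq_add_tanh_sq s

theorem isSchrodingerSolution_tanh :
    IsSchrodingerSolution (modePotential 0) tanh (fun s => 1 - tanh s ^ 2) := by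
  convert! IsSchrodingerSolution.darboux_tanh (k := 0)
    (by simpa using .affine 0 (-1)) using 2
  all_goals ring

theorem isSchrodingerSolution_mul_tanh_sub_one :
    IsSchrodingerSolution (modePotential 0) (fun s => s * tanh s - 1)
      (fun s => s * (1 - tanh s ^ 2) + tanh s) := by
  convert! IsSchrodingerSolution.darboux_tanh (k := 0)
    (by simpa using .affine (-1) 0) using 2
  all_goals ring

theorem cosh_sub_tanh_mul_sinh (s : ℝ) : cosh s - tanh s * sinh s = (cosh s)⁻¹ := by
  have hc := (cosh_pos s).ne'
  rw [tanh_eq_sinh_div_cosh]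
  field_simp
  linarith [cosh_sq s]

theorem isSchrodingerSolution_inv_cosh :
    IsSchrodingerSolution (modePotential 1) (fun s => (cosh s)⁻¹)
      (fun s => -(tanh s * (cosh s)⁻¹)) := by
  convert! IsSchrodingerSolution.darboux_tanh (k := 1)
    (by simpa using isSchrodingerSolution_sinh) using 2 with s
  all_goals
    rw [← cosh_sub_tanh_mul_sinh]
    try ring

theorem isSchrodingerSolution_sinh_add_mul_inv_cosh :
    IsSchrodingerSolution (modePotential 1) (fun s => sinh s + s * (cosh s)⁻¹)
      (fun s => cosh s + ((cosh s)⁻¹ - s * (tanh s * (cosh s)⁻¹))) where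
  hasDerivAt s := by
    convert! (hasDerivAt_sinh s).add
      ((hasDerivAt_id s).mul (isSchrodingerSolution_inv_cosh.hasDerivAt s)) using 1
    simp only [id]
    ring
  hasDerivAt_deriv s := by
    convert! (hasDerivAt_cosh s).add ((isSchrodingerSolution_inv_cosh.hasDerivAt s).add
      ((hasDerivAt_id s).mul (isSchrodingerSolution_inv_cosh.hasDerivAt_deriv s))) using 1
    · ext t
      simp only [Pi.add_apply, Pi.mul_apply, id]
      ring
    · have hc := (cosh_pos s).ne'
      simp only [modePotential, tanh_eq_sinh_div_cosh, id]
      field_simp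
      ring

/-- The Darboux transform of `exp (k s)`. For `k ^ 2 ∉ {0, 1}`, the functions `expMode k` and
`expMode (-k)` form a basis of the solutions for the potential `modePotential k`. -/
noncomputable def expMode (k s : ℝ) : ℝ := exp (k * s) * (k - tanh s)

theorem expMode_neg_right (k s : ℝ) : expMode k (-s) = -expMode (-k) s := by
  simp only [expMode, tanh_neg, mul_neg, neg_mul]
  ring

theorem isSchrodingerSolution_expMode (k : ℝ) :
    IsSchrodingerSolution (modePotential k) (expMode k)
      (fun s => exp (k * s) * (tanh s ^ 2 + (k ^ 2 - 1) - k * tanh s)) := by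
  convert! (isSchrodingerSolution_exp_mul k).darboux_tanh using 2
  · rw [expMode]
    ring
  · ring

namespace IsSchrodingerSolution

variable {f f' : ℝ → ℝ}

theorem exists_eq_tanh_add (hf : IsSchrodingerSolution (modePotential 0) f f') :
    ∃ α β : ℝ, ∀ s, f s = α * tanh s + β * (s * tanh s - 1) :=
  hf.exists_eq_add_of_wronskian_ne_zero isSchrodingerSolution_tanh
    isSchrodingerSolution_mul_tanh_sub_one (t := 0) (by simp)

theorem exists_eq_inv_cosh_add (hf : IsSchrodingerSolution (modePotential 1) f f') :
    ∃ α β : ℝ, ∀ s, f s = α * (cosh s)⁻¹ + β * (sinh s + s * (cosh s)⁻¹) :=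
  hf.exists_eq_add_of_wronskian_ne_zero isSchrodingerSolution_inv_cosh
    isSchrodingerSolution_sinh_add_mul_inv_cosh (t := 0) (by norm_num)

theorem exists_eq_expMode_add {k : ℝ} (hf : IsSchrodingerSolution (modePotential k) f f')
    (hk₀ : k ≠ 0) (hk₁ : k ^ 2 ≠ 1) :
    ∃ α β : ℝ, ∀ s, f s = α * expMode k s + β * expMode (-k) s := by
  refine hf.exists_eq_add_of_wronskian_ne_zero (isSchrodingerSolution_expMode k)
    (modePotential_neg k ▸ isSchrodingerSolution_expMode (-k)) (t := 0) ?_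
  have hW : 2 * k * (k ^ 2 - 1) ≠ 0 := by simp [hk₀, sub_ne_zero.2 hk₁]
  convert! hW using 1
  simp [expMode]
  ring

end IsSchrodingerSolution

theorem tendsto_exp_neg_mul_atTop_nhds_zero {c : ℝ} (hc : 0 < c) :
    Tendsto (fun s => exp (-(c * s))) atTop (𝓝 0) :=
  tendsto_exp_neg_atTop_nhds_zero.comp (tendsto_id.const_mul_atTop hc)

theorem tendsto_tanh_atTop : Tendsto tanh atTop (𝓝 1) := by
  have hexp := tendsto_exp_neg_mul_atTop_nhds_zero two_pos
  have hquot : Tendsto (fun s => (1 - exp (-(2 * s))) / (1 + exp (-(2 * s)))) atTop (𝓝 1) := by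
    simpa [Pi.div_def] using (hexp.const_sub 1).div (hexp.const_add 1) (by norm_num)
  refine hquot.congr fun s => ?_
  have hsplit : exp (-(2 * s)) = exp (-s) * exp (-s) := by rw [← exp_add]; ring_nf
  rw [tanh_eq, hsplit, exp_neg]
  field_simp

theorem tendsto_cosh_mul_exp_neg_atTop : Tendsto (fun s => cosh s * exp (-s)) atTop (𝓝 2⁻¹) := by
  have hexp := tendsto_exp_neg_mul_atTop_nhds_zero two_pos
  have hlim : Tendsto (fun s => (1 + exp (-(2 * s))) / 2) atTop (𝓝 2⁻¹) := by
    simpa using (hexp.const_add 1).div_const 2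
  refine hlim.congr fun s => ?_
  have hsplit : exp (-(2 * s)) = exp (-s) * exp (-s) := by rw [← exp_add]; ring_nf
  rw [cosh_eq, hsplit, exp_neg]
  field_simp

theorem tendsto_cosh_rpow_mul_exp_neg_atTop {p k : ℝ} (hpk : p < k) :
    Tendsto (fun s => cosh s ^ p * exp (-(k * s))) atTop (𝓝 0) := by
  have hpow := tendsto_cosh_mul_exp_neg_atTop.rpow_const (p := p) (.inl (by norm_num))
  have hlim := hpow.mul (tendsto_exp_neg_mul_atTop_nhds_zero (sub_pos.2 hpk))
  rw [mul_zero] at hlim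
  refine hlim.congr fun s => ?_
  rw [mul_rpow (cosh_pos s).le (exp_pos _).le, ← exp_mul, mul_assoc, ← exp_add]
  ring_nf

theorem tendsto_expMode_add_mul_exp_neg_atTop {k : ℝ} (hk : 0 < k) (α β : ℝ) :
    Tendsto (fun s => (α * expMode k s + β * expMode (-k) s) * exp (-(k * s))) atTop
      (𝓝 (α * (k - 1))) := by
  have hgrow : Tendsto (fun s => α * (k - tanh s)) atTop (𝓝 (α * (k - 1))) :=
    (tendsto_tanh_atTop.const_sub k).const_mul α
  have hdecay : Tendsto (fun s => exp (-(2 * k * s)) * (β * (-k - tanh s))) atTop (𝓝 0) := by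
    simpa using (tendsto_exp_neg_mul_atTop_nhds_zero (by positivity : 0 < 2 * k)).mul
      ((tendsto_tanh_atTop.const_sub (-k)).const_mul β)
  rw [← add_zero (α * (k - 1))]
  refine (hgrow.add hdecay).congr fun s => ?_
  have hsplit : exp (-(2 * k * s)) = exp (-(k * s)) * exp (-(k * s)) := by
    rw [← exp_add]; ring_nf
  have hcancel : exp (k * s) * exp (-(k * s)) = 1 := by rw [← exp_add]; simp
  simp only [expMode, hsplit, neg_mul]
  linear_combination -α * (k - tanh s) * hcancel

theorem eq_zero_of_abs_expMode_add_le_cosh_rpow {k p K α β : ℝ} (hk : 1 < k) (hpk : p < k)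
    (h : ∀ s, |α * expMode k s + β * expMode (-k) s| ≤ K * cosh s ^ p) : α = 0 := by
  have hbound (s : ℝ) : ‖(α * expMode k s + β * expMode (-k) s) * exp (-(k * s))‖ ≤
      K * (cosh s ^ p * exp (-(k * s))) := by
    rw [norm_mul, norm_of_nonneg (exp_pos _).le, ← mul_assoc]
    exact mul_le_mul_of_nonneg_right (h s) (exp_pos _).le
  have hzero : Tendsto (fun s => K * (cosh s ^ p * exp (-(k * s)))) atTop (𝓝 0) := by
    simpa using (tendsto_cosh_rpow_mul_exp_neg_atTop hpk).const_mul K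
  have hlim := tendsto_nhds_unique
    (tendsto_expMode_add_mul_exp_neg_atTop (zero_lt_one.trans hk) α β)
    (squeeze_zero_norm hbound hzero)
  exact (mul_eq_zero.1 hlim).resolve_right (sub_pos.2 hk).ne'

theorem IsSchrodingerSolution.eq_zero_of_abs_le_cosh_rpow {k p K : ℝ} {f f' : ℝ → ℝ}
    (hf : IsSchrodingerSolution (modePotential k) f f') (hk : 1 < k) (hpk : p < k)
    (hbound : ∀ s, |f s| ≤ K * cosh s ^ p) (s : ℝ) : f s = 0 := by
  obtain ⟨α, β, hαβ⟩ := hf.exists_eq_expMode_add (zero_lt_one.trans hk).ne'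
    (one_lt_pow₀ hk two_ne_zero).ne'
  have hα : α = 0 := eq_zero_of_abs_expMode_add_le_cosh_rpow hk hpk fun t => hαβ t ▸ hbound t
  have hβ : -β = 0 := by
    refine eq_zero_of_abs_expMode_add_le_cosh_rpow (K := K) (β := -α) hk hpk fun t => ?_
    have ht := hbound (-t)
    rw [hαβ, expMode_neg_right, expMode_neg_right, neg_neg, cosh_neg] at ht
    convert! ht using 2
    ring
  rw [hαβ, hα, neg_eq_zero.1 hβ]
  ring

theorem periodic_of_hasDerivAt {𝕜 E : Type*} [NontriviallyNormedField 𝕜] [NormedAddCommGroup E]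
    [NormedSpace 𝕜 E] {f f' : 𝕜 → E} {T : 𝕜} (hf : Function.Periodic f T)
    (hf' : ∀ x, HasDerivAt f (f' x) x) : Function.Periodic f' T := fun x => by
  have hshift := (hf' (x + T)).comp_add_const x T
  rw [funext hf] at hshift
  exact hshift.unique (hf' x)

theorem integral_deriv_deriv_mul_of_periodic {f f' f'' g g' g'' : ℝ → ℝ} {T : ℝ}
    (hf : ∀ x, HasDerivAt f (f' x) x) (hf' : ∀ x, HasDerivAt f' (f'' x) x) (hf'' : Continuous f'')
    (hg : ∀ x, HasDerivAt g (g' x) x) (hg' : ∀ x, HasDerivAt g' (g'' x) x) (hg'' : Continuous g'')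
    (hfT : Function.Periodic f T) (hgT : Function.Periodic g T) :
    ∫ x in (0)..T, f'' x * g x = ∫ x in (0)..T, f x * g'' x := by
  have hfc : Continuous f := continuous_iff_continuousAt.2 fun x => (hf x).continuousAt
  have hgc : Continuous g := continuous_iff_continuousAt.2 fun x => (hg x).continuousAt
  have hf''g : IntervalIntegrable (fun x => f'' x * g x) volume 0 T :=
    (hf''.mul hgc).intervalIntegrable 0 T
  have hfg'' : IntervalIntegrable (fun x => f x * g'' x) volume 0 T :=
    (hfc.mul hg'').intervalIntegrable 0 T
  have hderiv (x : ℝ) :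
      HasDerivAt (fun x => f' x * g x - f x * g' x) (f'' x * g x - f x * g'' x) x := by
    convert! ((hf' x).mul (hg x)).sub ((hf x).mul (hg' x)) using 1
    ring
  have hgreen := intervalIntegral.integral_eq_sub_of_hasDerivAt (fun x _ => hderiv x)
    (hf''g.sub hfg'')
  rw [hfT.eq, hgT.eq, (periodic_of_hasDerivAt hfT hf).eq, (periodic_of_hasDerivAt hgT hg).eq,
    sub_self, intervalIntegral.integral_sub hf''g hfg''] at hgreen
  exact sub_eq_zero.1 hgreen

theorem hasDerivAt_integral_of_continuous {E : Type*} [NormedAddCommGroup E] [NormedSpace ℝ E]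
    {F F' : ℝ → ℝ → E} (hF : ∀ t, Continuous (F t)) (hF' : Continuous (Function.uncurry F'))
    (hderiv : ∀ t x, HasDerivAt (fun t => F t x) (F' t x) t) (a b t : ℝ) :
    HasDerivAt (fun t => ∫ x in a..b, F t x) (∫ x in a..b, F' t x) t := by
  obtain ⟨K, hK⟩ := ((isCompact_closedBall t 1).prod
    (isCompact_uIcc (a := a) (b := b))).exists_bound_of_continuousOn hF'.continuousOn
  refine (intervalIntegral.hasDerivAt_integral_of_dominated_loc_of_deriv_le (bound := fun _ => K)
    (Metric.closedBall_mem_nhds t one_pos) (.of_forall fun r => (hF r).aestronglyMeasurable)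
    ((hF t).intervalIntegrable a b) (hF'.uncurry_left t).aestronglyMeasurable
    (.of_forall fun x hx r hr => hK (r, x) ⟨hr, Set.uIoc_subset_uIcc hx⟩)
    intervalIntegrable_const (.of_forall fun x _ r _ => hderiv r x)).2

theorem contDiff_uncurry_deriv {𝕜 E F : Type*} [NontriviallyNormedField 𝕜]
    [NormedAddCommGroup E] [NormedSpace 𝕜 E] [NormedAddCommGroup F] [NormedSpace 𝕜 F]
    {f : E → 𝕜 → F} {m n : WithTop ℕ∞} (hf : ContDiff 𝕜 n (Function.uncurry f))
    (hmn : m + 1 ≤ n) : ContDiff 𝕜 m (Function.uncurry fun x => deriv (f x)) :=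
  (hf.comp ((contDiff_fst.comp contDiff_fst).prodMk contDiff_snd) :
    ContDiff 𝕜 n (Function.uncurry fun (p : E × 𝕜) => f p.1)).fderiv_apply
    contDiff_snd contDiff_const hmn

theorem hasDerivAt_of_contDiff_uncurry {𝕜 E F : Type*} [NontriviallyNormedField 𝕜]
    [NormedAddCommGroup E] [NormedSpace 𝕜 E] [NormedAddCommGroup F] [NormedSpace 𝕜 F]
    {f : E → 𝕜 → F} {n : WithTop ℕ∞} (hf : ContDiff 𝕜 n (Function.uncurry f)) (hn : n ≠ 0)
    (x : E) (s : 𝕜) : HasDerivAt (f x) (deriv (f x) s) s :=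
  (hf.comp (contDiff_prodMk_right x)).differentiable hn s |>.hasDerivAt

theorem hasDerivAt_integral_mul_of_contDiff {u : ℝ → ℝ → ℝ} {w : ℝ → ℝ}
    (hu : ContDiff ℝ 1 (Function.uncurry u)) (hw : Continuous w) (a b s : ℝ) :
    HasDerivAt (fun s => ∫ x in a..b, u x s * w x) (∫ x in a..b, deriv (u x) s * w x) s :=
  hasDerivAt_integral_of_continuous (F := fun s x => u x s * w x)
    (F' := fun s x => deriv (u x) s * w x)
    (fun s => (hu.continuous.uncurry_right s).mul hw)
    (((contDiff_uncurry_deriv (m := 0) hu (by norm_num)).continuous.comp continuous_swap).mul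
      (hw.comp continuous_snd))
    (fun s x => (hasDerivAt_of_contDiff_uncurry hu one_ne_zero x s).mul_const (w x)) a b s

/-- Separation of variables: Green's identity moves `∂²/∂x²` onto the eigenfunction `w`. -/
theorem isSchrodingerSolution_integral_mul {u : ℝ → ℝ → ℝ} {q w w' : ℝ → ℝ} {μ T : ℝ}
    (hu : ContDiff ℝ 2 (Function.uncurry u)) (huT : ∀ s, Function.Periodic (fun x => u x s) T)
    (heq : ∀ x s, iteratedDeriv 2 (fun x => u x s) x + iteratedDeriv 2 (u x) s = q s * u x s)
    (hw : IsSchrodingerSolution (fun _ => μ) w w') (hwT : Function.Periodic w T) :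
    IsSchrodingerSolution (fun s => q s - μ) (fun s => ∫ x in (0)..T, u x s * w x)
      (fun s => ∫ x in (0)..T, deriv (u x) s * w x) := by
  have hwc : Continuous w := continuous_iff_continuousAt.2 fun x => (hw.hasDerivAt x).continuousAt
  refine ⟨hasDerivAt_integral_mul_of_contDiff (hu.of_le one_le_two) hwc 0 T, fun s => ?_⟩
  convert! hasDerivAt_integral_mul_of_contDiff (contDiff_uncurry_deriv hu (by norm_num)) hwc 0 T s
    using 1
  have hswap : ContDiff ℝ 2 (Function.uncurry fun s x => u x s) :=
    hu.comp (contDiff_snd.prodMk contDiff_fst)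
  have hux := contDiff_uncurry_deriv (m := 1) hswap (by norm_num)
  have huxx : Continuous fun x => deriv (deriv fun x => u x s) x :=
    (contDiff_uncurry_deriv (m := 0) hux (by norm_num)).continuous.uncurry_left s
  have hgreen : ∫ x in (0)..T, deriv (deriv fun x => u x s) x * w x =
      ∫ x in (0)..T, u x s * (μ * w x) :=
    integral_deriv_deriv_mul_of_periodic (hasDerivAt_of_contDiff_uncurry hswap two_ne_zero s)
      (hasDerivAt_of_contDiff_uncurry hux one_ne_zero s) huxx hw.hasDerivAt hw.hasDerivAt_deriv
      (hwc.const_mul μ) (huT s) hwT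
  have hsplit (x : ℝ) : deriv (deriv (u x)) s * w x =
      q s * (u x s * w x) - deriv (deriv fun x => u x s) x * w x := by
    have hx := heq x s
    simp only [iteratedDeriv_succ, iteratedDeriv_zero] at hx
    linear_combination w x * hx
  simp_rw [hsplit]
  have huw : IntervalIntegrable (fun x => q s * (u x s * w x)) volume 0 T :=
    (((hu.continuous.uncurry_right s).mul hwc).const_mul (q s)).intervalIntegrable 0 T
  have huxxw : IntervalIntegrable (fun x => deriv (deriv fun x => u x s) x * w x) volume 0 T :=
    (huxx.mul hwc).intervalIntegrable 0 T
  rw [intervalIntegral.integral_sub huw huxxw, hgreen]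
  simp_rw [mul_left_comm _ μ, intervalIntegral.integral_const_mul]
  ring

/-- The cosine coefficient `aₙ` of the real Fourier series
`a₀ / 2 + ∑ₙ (aₙ cos (n x) + bₙ sin (n x))` of a `2π`-periodic function. -/
noncomputable def cosCoeff (f : ℝ → ℝ) (n : ℤ) : ℝ := π⁻¹ * ∫ x in (0)..(2 * π), f x * cos (n * x)

/-- The sine coefficient `bₙ` of the real Fourier series
`a₀ / 2 + ∑ₙ (aₙ cos (n x) + bₙ sin (n x))` of a `2π`-periodic function. -/
noncomputable def sinCoeff (f : ℝ → ℝ) (n : ℤ) : ℝ := π⁻¹ * ∫ x in (0)..(2 * π), f x * sin (n * x)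

section FourierCoefficients

variable {f : ℝ → ℝ}

theorem cosCoeff_neg (f : ℝ → ℝ) (n : ℤ) : cosCoeff f (-n) = cosCoeff f n := by
  simp [cosCoeff]

theorem sinCoeff_neg (f : ℝ → ℝ) (n : ℤ) : sinCoeff f (-n) = -sinCoeff f n := by
  simp [sinCoeff]

theorem abs_inv_pi_mul_integral_mul_le {w : ℝ → ℝ} {K : ℝ} (hf : ∀ x, |f x| ≤ K)
    (hw : ∀ x, |w x| ≤ 1) : |π⁻¹ * ∫ x in (0)..(2 * π), f x * w x| ≤ 2 * K := by
  have hfw (x : ℝ) : ‖f x * w x‖ ≤ K := by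
    rw [norm_mul]
    exact (mul_le_of_le_one_right (norm_nonneg _) (hw x)).trans (hf x)
  have hint : |∫ x in (0)..(2 * π), f x * w x| ≤ K * |2 * π - 0| :=
    intervalIntegral.norm_integral_le_of_norm_le_const fun x _ => hfw x
  rw [sub_zero, abs_of_pos two_pi_pos] at hint
  rw [abs_mul, abs_of_pos (inv_pos.2 pi_pos), inv_mul_le_iff₀ pi_pos]
  exact hint.trans_eq (by ring)

theorem abs_cosCoeff_le {K : ℝ} (hf : ∀ x, |f x| ≤ K) (n : ℤ) : |cosCoeff f n| ≤ 2 * K :=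
  abs_inv_pi_mul_integral_mul_le hf fun x => abs_cos_le_one (n * x)

theorem abs_sinCoeff_le {K : ℝ} (hf : ∀ x, |f x| ≤ K) (n : ℤ) : |sinCoeff f n| ≤ 2 * K :=
  abs_inv_pi_mul_integral_mul_le hf fun x => abs_sin_le_one (n * x)

theorem fourier_two_pi_coe (n : ℤ) (x : ℝ) :
    fourier n (x : AddCircle (2 * π)) = (cos (n * x) : ℂ) + sin (n * x) * Complex.I := by
  have hpi : (π : ℂ) ≠ 0 := Complex.ofReal_ne_zero.2 pi_ne_zero
  rw [fourier_coe_apply, Complex.ofReal_cos, Complex.ofReal_sin, ← Complex.exp_mul_I]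
  push_cast
  field_simp

local instance : Fact (0 < 2 * π) := ⟨two_pi_pos⟩

theorem fourierCoeff_two_pi_eq (hf : Continuous f) {F : AddCircle (2 * π) → ℂ}
    (hF : ∀ x : ℝ, F x = f x) (n : ℤ) :
    fourierCoeff F n = (cosCoeff f n - sinCoeff f n * Complex.I) / 2 := by
  have hcos : IntervalIntegrable (fun x => ((f x * cos (n * x) : ℝ) : ℂ)) volume 0 (2 * π) :=
    Continuous.intervalIntegrable (by fun_prop) _ _
  have hsin : IntervalIntegrable (fun x => ((f x * sin (n * x) : ℝ) : ℂ) * Complex.I)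
      volume 0 (2 * π) := Continuous.intervalIntegrable (by fun_prop) _ _
  have hintegrand (x : ℝ) : fourier (-n) (x : AddCircle (2 * π)) • F x =
      (f x * cos (n * x) : ℝ) - (f x * sin (n * x) : ℝ) * Complex.I := by
    rw [fourier_two_pi_coe, hF, smul_eq_mul, Int.cast_neg, neg_mul, cos_neg, sin_neg]
    push_cast
    ring
  rw [fourierCoeff_eq_intervalIntegral F n 0, zero_add]
  simp_rw [hintegrand]
  rw [intervalIntegral.integral_sub hcos hsin, intervalIntegral.integral_mul_const,
    intervalIntegral.integral_ofReal, intervalIntegral.integral_ofReal, Complex.real_smul,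
    cosCoeff, sinCoeff]
  push_cast
  ring

theorem hasSum_cosCoeff_mul_cos_add_sinCoeff_mul_sin (hf : Continuous f)
    (hper : Function.Periodic f (2 * π)) (hcos : Summable fun n : ℕ => cosCoeff f n)
    (hsin : Summable fun n : ℕ => sinCoeff f n) (x : ℝ) :
    HasSum (fun n : ℕ => cosCoeff f n * cos (n * x) + sinCoeff f n * sin (n * x))
      (f x + cosCoeff f 0 / 2) := by
  have hperC : Function.Periodic (fun x => (f x : ℂ)) (2 * π) := hper.comp Complex.ofReal
  let F : C(AddCircle (2 * π), ℂ) :=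
    ⟨hperC.lift, continuous_coinduced_dom.2 (Complex.continuous_ofReal.comp hf)⟩
  have hcoeff (n : ℤ) : fourierCoeff F n = (cosCoeff f n - sinCoeff f n * Complex.I) / 2 :=
    fourierCoeff_two_pi_eq hf hperC.lift_coe n
  have hcosC : Summable fun n : ℕ => (cosCoeff f n : ℂ) := Complex.summable_ofReal.2 hcos
  have hsinC : Summable fun n : ℕ => (sinCoeff f n * Complex.I : ℂ) :=
    (Complex.summable_ofReal.2 hsin).mul_right _
  have hsummable : Summable (fourierCoeff F) := by
    refine .of_nat_of_neg ?_ ?_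
    · simpa only [hcoeff] using (hcosC.sub hsinC).div_const 2
    · simpa only [hcoeff, cosCoeff_neg, sinCoeff_neg, Complex.ofReal_neg, neg_mul, sub_neg_eq_add]
        using (hcosC.add hsinC).div_const 2
  have hsum :=
    (has_pointwise_sum_fourier_series_of_summable hsummable (x : AddCircle _)).nat_add_neg
  rw [← Complex.hasSum_ofReal]
  convert! hsum using 1
  · funext n
    simp only [hcoeff, fourier_two_pi_coe, cosCoeff_neg, sinCoeff_neg, smul_eq_mul, Int.cast_neg,
      Int.cast_natCast, neg_mul, cos_neg, sin_neg, Complex.ofReal_add, Complex.ofReal_mul,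
      Complex.ofReal_neg]
    linear_combination (sinCoeff f n * sin (n * x) : ℂ) * Complex.I_sq
  · rw [hcoeff, show F x = f x from hperC.lift_coe x]
    simp [sinCoeff]

theorem eq_sum_cosCoeff_mul_cos_add_sinCoeff_mul_sin (hf : Continuous f)
    (hper : Function.Periodic f (2 * π)) {N : ℕ} (hcos : ∀ n : ℕ, N < n → cosCoeff f n = 0)
    (hsin : ∀ n : ℕ, N < n → sinCoeff f n = 0) (x : ℝ) :
    f x = cosCoeff f 0 / 2 +
      ∑ n ∈ Finset.Icc 1 N, (cosCoeff f n * cos (n * x) + sinCoeff f n * sin (n * x)) := by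
  have hlt {n : ℕ} (hn : n ∉ Finset.range (N + 1)) : N < n := by simpa using hn
  have hfinite : HasSum (fun n : ℕ => cosCoeff f n * cos (n * x) + sinCoeff f n * sin (n * x))
      (∑ n ∈ Finset.range (N + 1), (cosCoeff f n * cos (n * x) + sinCoeff f n * sin (n * x))) :=
    hasSum_sum_of_ne_finset_zero fun n hn => by simp [hcos n (hlt hn), hsin n (hlt hn)]
  have hsum := (hasSum_cosCoeff_mul_cos_add_sinCoeff_mul_sin hf hper
    (summable_of_ne_finset_zero fun n hn => hcos n (hlt hn))
    (summable_of_ne_finset_zero fun n hn => hsin n (hlt hn)) x).unique hfinite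
  rw [Finset.range_eq_Ico, Finset.sum_eq_sum_Ico_succ_bot (Nat.add_one_pos N),
    Finset.Ico_add_one_right_eq_Icc] at hsum
  simp only [Nat.cast_zero, zero_mul, cos_zero, sin_zero, mul_one, mul_zero, add_zero,
    zero_add] at hsum
  linarith

end FourierCoefficients

/-- A Jacobi field of the catenoid of class `C²`, in the conformal coordinates `(x, s)` of the
cylinder `𝕊¹ × ℝ`; the circle is encoded as `2π`-periodicity in `x`. -/
structure IsJacobiField (u : ℝ → ℝ → ℝ) : Prop where
  contDiff : ContDiff ℝ 2 (Function.uncurry u)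
  periodic : ∀ x s, u (x + 2 * π) s = u x s
  jacobi_eq : ∀ x s, iteratedDeriv 2 (fun x => u x s) x + iteratedDeriv 2 (u x) s +
    2 * (cosh s)⁻¹ ^ 2 * u x s = 0

namespace IsJacobiField

variable {u : ℝ → ℝ → ℝ} {p C : ℝ}

theorem isSchrodingerSolution_inv_pi_mul_integral_mul (hu : IsJacobiField u) {w w' : ℝ → ℝ} {k : ℝ}
    (hw : IsSchrodingerSolution (fun _ => -k ^ 2) w w') (hwT : Function.Periodic w (2 * π)) :
    IsSchrodingerSolution (modePotential k) (fun s => π⁻¹ * ∫ x in (0)..(2 * π), u x s * w x)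
      (fun s => π⁻¹ * ∫ x in (0)..(2 * π), deriv (u x) s * w x) := by
  have hmode : modePotential k = fun s => -(2 * (cosh s)⁻¹ ^ 2) - -k ^ 2 :=
    funext fun s => by rw [modePotential]; ring
  rw [hmode]
  exact (isSchrodingerSolution_integral_mul hu.contDiff (fun s x => hu.periodic x s)
    (fun x s => by linear_combination hu.jacobi_eq x s) hw hwT).const_mul π⁻¹

theorem isSchrodingerSolution_cosCoeff (hu : IsJacobiField u) (n : ℤ) :
    IsSchrodingerSolution (modePotential n) (fun s => cosCoeff (fun x => u x s) n)
      (fun s => cosCoeff (fun x => deriv (u x) s) n) :=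
  hu.isSchrodingerSolution_inv_pi_mul_integral_mul (isSchrodingerSolution_cos_mul n) fun x => by
    rw [mul_add, cos_add_int_mul_two_pi]

theorem isSchrodingerSolution_sinCoeff (hu : IsJacobiField u) (n : ℤ) :
    IsSchrodingerSolution (modePotential n) (fun s => sinCoeff (fun x => u x s) n)
      (fun s => sinCoeff (fun x => deriv (u x) s) n) :=
  hu.isSchrodingerSolution_inv_pi_mul_integral_mul (isSchrodingerSolution_sin_mul n) fun x => by
    rw [mul_add, sin_add_int_mul_two_pi]

theorem cosCoeff_eq_zero_of_abs_le_cosh_rpow (hu : IsJacobiField u)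
    (hbound : ∀ x s, |u x s| ≤ C * cosh s ^ p) {n : ℤ} (hn : 1 < n) (hpn : p < n) (s : ℝ) :
    cosCoeff (fun x => u x s) n = 0 :=
  (hu.isSchrodingerSolution_cosCoeff n).eq_zero_of_abs_le_cosh_rpow (K := 2 * C)
    (by exact_mod_cast hn) hpn
    (fun s => (abs_cosCoeff_le (fun x => hbound x s) n).trans_eq (mul_assoc 2 C _).symm) s

theorem sinCoeff_eq_zero_of_abs_le_cosh_rpow (hu : IsJacobiField u)
    (hbound : ∀ x s, |u x s| ≤ C * cosh s ^ p) {n : ℤ} (hn : 1 < n) (hpn : p < n) (s : ℝ) :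
    sinCoeff (fun x => u x s) n = 0 :=
  (hu.isSchrodingerSolution_sinCoeff n).eq_zero_of_abs_le_cosh_rpow (K := 2 * C)
    (by exact_mod_cast hn) hpn
    (fun s => (abs_sinCoeff_le (fun x => hbound x s) n).trans_eq (mul_assoc 2 C _).symm) s

theorem eq_cosCoeff_add_of_abs_le_cosh_rpow (hu : IsJacobiField u) (hp : p < 2)
    (hbound : ∀ x s, |u x s| ≤ C * cosh s ^ p) (x s : ℝ) :
    u x s = cosCoeff (fun x => u x s) 0 / 2 + cosCoeff (fun x => u x s) 1 * cos x +
      sinCoeff (fun x => u x s) 1 * sin x := by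
  have hpn {n : ℕ} (hn : 1 < n) : p < (n : ℤ) := hp.trans_le (by exact_mod_cast hn)
  simpa [add_assoc] using eq_sum_cosCoeff_mul_cos_add_sinCoeff_mul_sin (N := 1)
    (hu.contDiff.continuous.uncurry_right s) (fun x => hu.periodic x s)
    (fun n hn => hu.cosCoeff_eq_zero_of_abs_le_cosh_rpow hbound (by exact_mod_cast hn) (hpn hn) s)
    (fun n hn => hu.sinCoeff_eq_zero_of_abs_le_cosh_rpow hbound (by exact_mod_cast hn) (hpn hn) s) x

end IsJacobiField

theorem jacobi_field_classification_general {p C : ℝ} (hp : p < 2) {u : ℝ → ℝ → ℝ}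
    (hu : IsJacobiField u) (hbound : ∀ x s, |u x s| ≤ C * cosh s ^ p) :
    ∃ c₁ c₂ c₃ c₄ c₅ c₆ : ℝ, ∀ x s : ℝ,
      u x s = c₁ * tanh s + c₂ * (s * tanh s - 1)
        + c₃ * cos x * (cosh s)⁻¹
        + c₄ * sin x * (cosh s)⁻¹
        + c₅ * cos x * (sinh s + s * (cosh s)⁻¹)
        + c₆ * sin x * (sinh s + s * (cosh s)⁻¹) := by
  obtain ⟨a₀, b₀, h₀⟩ := IsSchrodingerSolution.exists_eq_tanh_add
    (by simpa using hu.isSchrodingerSolution_cosCoeff 0)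
  obtain ⟨a₁, b₁, hcos⟩ := IsSchrodingerSolution.exists_eq_inv_cosh_add
    (by simpa using hu.isSchrodingerSolution_cosCoeff 1)
  obtain ⟨a₂, b₂, hsin⟩ := IsSchrodingerSolution.exists_eq_inv_cosh_add
    (by simpa using hu.isSchrodingerSolution_sinCoeff 1)
  refine ⟨a₀ / 2, b₀ / 2, a₁, a₂, b₁, b₂, fun x s => ?_⟩
  rw [hu.eq_cosCoeff_add_of_abs_le_cosh_rpow hp hbound x s, h₀, hcos, hsin]
  ring

/-- Classification of sub-quadratically-growing Jacobi fields on the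
cylinder: a smooth `2π`-periodic solution of `∂²u/∂x² + ∂²u/∂s² + 2 sech²(s) u = 0`
with `|u| ≤ C cosh(s)^(1+γ)`, `γ ∈ (0,1)`, is a geometric Jacobi field. -/
theorem jacobi_field_classification
    (γ C : ℝ) (hγ : γ ∈ Set.Ioo (0 : ℝ) 1) (hC : 0 < C)
    (u : ℝ → ℝ → ℝ)
    (hsmooth : ContDiff ℝ (⊤ : ℕ∞) (fun p : ℝ × ℝ => u p.1 p.2))
    (hper : ∀ x s : ℝ, u (x + 2 * Real.pi) s = u x s)
    (heq : ∀ x s : ℝ,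
      iteratedDeriv 2 (fun x' => u x' s) x
        + iteratedDeriv 2 (fun s' => u x s') s
        + 2 * ((Real.cosh s)⁻¹) ^ 2 * u x s = 0)
    (hbound : ∀ x s : ℝ, |u x s| ≤ C * Real.cosh s ^ (1 + γ)) :
    ∃ c₁ c₂ c₃ c₄ c₅ c₆ : ℝ, ∀ x s : ℝ,
      u x s = c₁ * Real.tanh s + c₂ * (s * Real.tanh s - 1)
        + c₃ * Real.cos x * (Real.cosh s)⁻¹
        + c₄ * Real.sin x * (Real.cosh s)⁻¹
        + c₅ * Real.cos x * (Real.sinh s + s * (Real.cosh s)⁻¹)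
        + c₆ * Real.sin x * (Real.sinh s + s * (Real.cosh s)⁻¹) := by
  exact jacobi_field_classification_general (by linarith [hγ.2])
    ⟨contDiff_infty.1 hsmooth 2, hper, heq⟩ hbound
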